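/- For every execution e of the call-by-need Storeless Abstract Machine from an initial configuration (t̄₀, ⟨·⟩)_term, the number of occurrences of rule (1) (the transition (t̄ū, E)_term →_o (t̄, E⟨⟨·⟩ū⟩)_term) in e is at most |t̄₀| · (5·|e|_b + 2). -/

import Mathlib

/-!
The proof is a potential argument. The potential of a configuration is the number of application
nodes lying outside every abstraction, in the term under focus and in all the side terms of the
evaluation context. Rule (1) consumes exactly one such node. Rules (2), (3), (5), (6) leave the
potential unchanged; for rule (5) this is because the duplicated term is a value, whose potential
is zero. Rule (4) exposes the body of an abstraction, and so increases the potential by at most the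
size of that body. Since every term in a reachable configuration has size at most `|t̄₀|` (all of
them are, up to renaming, sub-terms of `t̄₀`), each β-transition releases at most `|t̄₀|` new nodes
(`Step.bounded_and_potential`). Hence rule (1) fires at most `|t̄₀| + |t̄₀| · |e|_b` times, which is
stronger than the claimed bound.
-/

namespace SAM

/-- Terms of the λ-calculus with explicit substitutions:
`t ::= x | λx.t | t t | t[x←t]` (`esub t x u` denotes `t[x←u]`). -/
inductive Term : Type
  | var : ℕ → Term
  | lam : ℕ → Term → Term
  | app : Term → Term → Term
  | esub : Term → ℕ → Term → Term
  deriving DecidableEq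

namespace Term

/-- Pure terms contain no explicit substitutions. -/
def Pure : Term → Prop
  | var _ => True
  | lam _ t => t.Pure
  | app t u => t.Pure ∧ u.Pure
  | esub _ _ _ => False

/-- Pure values are abstractions of pure terms. -/
def IsPureValue : Term → Prop
  | lam _ t => t.Pure
  | _ => False

/-- The multiset of free variables of a term. -/
def fv : Term → Multiset ℕ
  | var x => {x}
  | lam x t => t.fv.filter (· ≠ x)
  | app t u => t.fv + u.fv
  | esub t x u => t.fv.filter (· ≠ x) + u.fv

/-- The size of a term. -/
def size : Term → ℕ
  | var _ => 1
  | lam _ t => t.size + 1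
  | app t u => t.size + u.size + 1
  | esub t _ u => t.size + u.size + 1

/-- The multiset of variables bound (by λ or by an explicit substitution) in a term. -/
def binders : Term → Multiset ℕ
  | var _ => 0
  | lam x t => x ::ₘ t.binders
  | app t u => t.binders + u.binders
  | esub t x u => x ::ₘ (t.binders + u.binders)

/-- The multiset of all variables occurring (free, bound or binding) in a term. -/
def vars : Term → Multiset ℕ
  | var x => {x}
  | lam x t => x ::ₘ t.vars
  | app t u => t.vars + u.vars
  | esub t x u => x ::ₘ (t.vars + u.vars)

/-- The number of explicit-substitution constructors occurring in a term. -/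
def esubCount : Term → ℕ
  | var _ => 0
  | lam _ t => t.esubCount
  | app t u => t.esubCount + u.esubCount
  | esub t _ u => t.esubCount + u.esubCount + 1

/-- A term is closed if it has no free variables. -/
def Closed (t : Term) : Prop := t.fv = 0

/-- A term is well-named if each variable is bound at most once in it and
no bound variable of it occurs among its free variables. -/
def WellNamed (t : Term) : Prop :=
  t.binders.Nodup ∧ ∀ x ∈ t.binders, x ∉ t.fv

/-- de Bruijn skeletons, used to define α-equivalence. -/
inductive DB : Type
  | bvar : ℕ → DB
  | fvar : ℕ → DB
  | lam : DB → DB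
  | app : DB → DB → DB
  | esub : DB → DB → DB
  deriving DecidableEq

/-- Index of a variable in a list of binders. -/
def dbIndex (x : ℕ) : List ℕ → Option ℕ
  | [] => none
  | y :: Γ => if x = y then some 0 else (dbIndex x Γ).map (· + 1)

/-- Conversion to de Bruijn skeleton, relative to a list of enclosing binders. -/
def toDB : Term → List ℕ → DB
  | var x, Γ =>
      match dbIndex x Γ with
      | some n => DB.bvar n
      | none => DB.fvar x
  | lam x t, Γ => DB.lam (t.toDB (x :: Γ))
  | app t u, Γ => DB.app (t.toDB Γ) (u.toDB Γ)
  | esub t x u, Γ => DB.esub (t.toDB (x :: Γ)) (u.toDB Γ)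

/-- α-equivalence of terms. -/
def AlphaEq (t u : Term) : Prop := t.toDB [] = u.toDB []

/-- The (reflexive) sub-term relation. -/
inductive Subterm : Term → Term → Prop
  | refl (t) : Subterm t t
  | lam {s t} (x) : Subterm s t → Subterm s (Term.lam x t)
  | appL {s t} (u) : Subterm s t → Subterm s (Term.app t u)
  | appR (t) {s u} : Subterm s u → Subterm s (Term.app t u)
  | esubL {s t} (x) (u) : Subterm s t → Subterm s (Term.esub t x u)
  | esubR (t) (x) {s u} : Subterm s u → Subterm s (Term.esub t x u)

/-- `s` is a sub-term of `t` up to α-equivalence. -/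
def SubtermUpToAlpha (s t : Term) : Prop := ∃ s', Subterm s' t ∧ AlphaEq s s'

/-- `v'` is a copy of `v` whose bound variables are renamed to distinct
fresh variables, avoiding the variables in `avoid`. -/
def IsFreshCopy (v v' : Term) (avoid : Multiset ℕ) : Prop :=
  AlphaEq v v' ∧ v'.Pure ∧ v'.binders.Nodup ∧ ∀ x ∈ v'.binders, x ∉ avoid

end Term

/-- Evaluation contexts:
`E ::= ⟨·⟩ | E t̄ | E[x←t̄] | E'⟨x⟩[x←E]`
(`sub2 E' x E` denotes `E'⟨x⟩[x←E]`; purity of the side terms is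
imposed by the well-formedness predicate `ECtx.WF`). -/
inductive ECtx : Type
  | hole : ECtx
  | app : ECtx → Term → ECtx
  | esub : ECtx → ℕ → Term → ECtx
  | sub2 : ECtx → ℕ → ECtx → ECtx
  deriving DecidableEq

namespace ECtx

/-- Well-formedness: all side terms in an evaluation context are pure,
as required by the grammar. -/
def WF : ECtx → Prop
  | hole => True
  | app E t => E.WF ∧ t.Pure
  | esub E _ t => E.WF ∧ t.Pure
  | sub2 E' _ E => E'.WF ∧ E.WF

/-- Substitution contexts `A ::= ⟨·⟩ | A[x←t̄]`. -/
inductive IsSubst : ECtx → Prop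
  | hole : IsSubst ECtx.hole
  | esub {A : ECtx} (x : ℕ) {t : Term} :
      t.Pure → IsSubst A → IsSubst (ECtx.esub A x t)

/-- Plugging a term into the hole of an evaluation context. -/
def plug : ECtx → Term → Term
  | hole, t => t
  | app E u, t => Term.app (E.plug t) u
  | esub E x u, t => Term.esub (E.plug t) x u
  | sub2 E' x E, t => Term.esub (E'.plug (Term.var x)) x (E.plug t)

/-- Plugging an evaluation context into the hole of an evaluation context. -/
def plugC : ECtx → ECtx → ECtx
  | hole, F => F
  | app E u, F => app (E.plugC F) u
  | esub E x u, F => esub (E.plugC F) x u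
  | sub2 E' x E, F => sub2 E' x (E.plugC F)

/-- The multiset `FV_M(E)` of free variables of an evaluation context,
relative to a multiset `M` for the hole. -/
def fv : ECtx → Multiset ℕ → Multiset ℕ
  | hole, M => M
  | app E t, M => E.fv M + t.fv
  | esub E x t, M => (E.fv M).filter (· ≠ x) + t.fv
  | sub2 E' x E, M => (E'.fv {x}).filter (· ≠ x) + E.fv M

end ECtx

/-- Configurations are tagged `term` or `ctxt`. -/
inductive Tag : Type
  | term | ctxt
  deriving DecidableEq

/-- A configuration of the SAM: a (pure) term, an evaluation context, and a tag. -/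
structure Config : Type where
  t : Term
  E : ECtx
  tag : Tag
  deriving DecidableEq

/-- The six rules of the SAM. -/
inductive Rule : Type
  | r1 | r2 | r3 | r4 | r5 | r6
  deriving DecidableEq

/-- Labels of SAM transitions. -/
inductive Label : Type
  | b | s | o
  deriving DecidableEq

/-- The label of each rule: rules (1)–(3) are overhead, rule (4) is beta,
rules (5)–(6) are substitution. -/
def Rule.label : Rule → Label
  | .r1 => .o
  | .r2 => .o
  | .r3 => .o
  | .r4 => .b
  | .r5 => .s
  | .r6 => .s

/-- The labelled transition system of the call-by-need Storeless Abstract Machine. -/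
inductive Step : Config → Rule → Config → Prop
  /-- (1) (t̄ū, E)_term →_o (t̄, E⟨⟨·⟩ū⟩)_term -/
  | r1 {t u : Term} {E : ECtx} :
      t.Pure → u.Pure → E.WF →
      Step ⟨Term.app t u, E, Tag.term⟩ Rule.r1
           ⟨t, E.plugC (ECtx.app ECtx.hole u), Tag.term⟩
  /-- (2) (x, E₁⟨E₂[x←t̄]⟩)_term →_o (t̄, E₁⟨E₂⟨x⟩[x←⟨·⟩]⟩)_term -/
  | r2 {x : ℕ} {t : Term} {E₁ E₂ : ECtx} :
      t.Pure → E₁.WF → E₂.WF →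
      Step ⟨Term.var x, E₁.plugC (ECtx.esub E₂ x t), Tag.term⟩ Rule.r2
           ⟨t, E₁.plugC (ECtx.sub2 E₂ x ECtx.hole), Tag.term⟩
  /-- (3) (v̄, E)_term →_o (v̄, E)_ctxt -/
  | r3 {v : Term} {E : ECtx} :
      v.IsPureValue → E.WF →
      Step ⟨v, E, Tag.term⟩ Rule.r3 ⟨v, E, Tag.ctxt⟩
  /-- (4) (λx.t̄, E⟨A⟨·⟩ū⟩)_ctxt →_b (t̄, E⟨A⟨⟨·⟩[x←ū]⟩⟩)_term -/
  | r4 {x : ℕ} {t u : Term} {E A : ECtx} :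
      t.Pure → u.Pure → E.WF → A.IsSubst →
      Step ⟨Term.lam x t, E.plugC (ECtx.app A u), Tag.ctxt⟩ Rule.r4
           ⟨t, E.plugC (A.plugC (ECtx.esub ECtx.hole x u)), Tag.term⟩
  /-- (5) (v̄, E₁⟨E₂⟨x⟩[x←A]⟩)_ctxt →_s (v̄^≈, E₁⟨A⟨E₂[x←v̄]⟩⟩)_ctxt, if x ∈ FV_∅(E₂),
  where v̄^≈ is a fresh copy of v̄ avoiding all variables of the configuration. -/
  | r5 {x : ℕ} {v v' : Term} {E₁ E₂ A : ECtx} :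
      v.IsPureValue → E₁.WF → E₂.WF → A.IsSubst →
      x ∈ E₂.fv 0 →
      v.IsFreshCopy v' ((E₁.plugC (ECtx.sub2 E₂ x A)).plug v).vars →
      Step ⟨v, E₁.plugC (ECtx.sub2 E₂ x A), Tag.ctxt⟩ Rule.r5
           ⟨v', E₁.plugC (A.plugC (ECtx.esub E₂ x v)), Tag.ctxt⟩
  /-- (6) (v̄, E₁⟨E₂⟨x⟩[x←A]⟩)_ctxt →_s (v̄, E₁⟨A⟨E₂⟩⟩)_ctxt, if x ∉ FV_∅(E₂). -/
  | r6 {x : ℕ} {v : Term} {E₁ E₂ A : ECtx} :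
      v.IsPureValue → E₁.WF → E₂.WF → A.IsSubst →
      x ∉ E₂.fv 0 →
      Step ⟨v, E₁.plugC (ECtx.sub2 E₂ x A), Tag.ctxt⟩ Rule.r6
           ⟨v, E₁.plugC (A.plugC E₂), Tag.ctxt⟩

/-- A finite execution: a sequence of SAM transitions, recorded by its trace of rules. -/
inductive Exec : Config → List Rule → Config → Prop
  | nil (c : Config) : Exec c [] c
  | cons {c c' c'' : Config} {r : Rule} {rs : List Rule} :
      Step c r c' → Exec c' rs c'' → Exec c (r :: rs) c''

/-- `|e|_ℓ`: the number of transitions labelled `ℓ` occurring in an execution trace. -/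
def labelCount (e : List Rule) (ℓ : Label) : ℕ := (e.map Rule.label).count ℓ

/-- A term may serve as the initial term of an initial configuration:
it is pure, closed and well-named. -/
def InitialTerm (t : Term) : Prop := t.Pure ∧ t.Closed ∧ t.WellNamed

/-- A configuration is reachable if some execution from an initial configuration ends at it. -/
def Reachable (c : Config) : Prop :=
  ∃ (t₀ : Term) (e : List Rule),
    InitialTerm t₀ ∧ Exec ⟨t₀, ECtx.hole, Tag.term⟩ e c

/-- The number of maximal subsequences of consecutive transitions consisting
solely of instances of rule (1) in a trace (each such run is counted at its
last element). -/
def countR1Runs : List Rule → ℕ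
  | [] => 0
  | [r] => if r = Rule.r1 then 1 else 0
  | r :: r' :: rs =>
      (if r = Rule.r1 ∧ r' ≠ Rule.r1 then 1 else 0) + countR1Runs (r' :: rs)


/-- The number of application nodes of a term that lie under no abstraction. -/
def Term.apps : Term → ℕ
  | .var _ => 0
  | .lam _ _ => 0
  | .app t u => t.apps + u.apps + 1
  | .esub t _ u => t.apps + u.apps

/-- The number of application nodes under no abstraction in the side terms of a context. The
application nodes of the context itself do not count, since rule (1) has already visited them. -/
def ECtx.apps : ECtx → ℕ
  | .hole => 0
  | .app E t => E.apps + t.apps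
  | .esub E _ t => E.apps + t.apps
  | .sub2 E' _ E => E'.apps + E.apps

/-- All side terms of the context have size at most `N`. -/
def ECtx.Bounded (N : ℕ) : ECtx → Prop
  | .hole => True
  | .app E t => E.Bounded N ∧ t.size ≤ N
  | .esub E _ t => E.Bounded N ∧ t.size ≤ N
  | .sub2 E' _ E => E'.Bounded N ∧ E.Bounded N

/-- All terms of the configuration have size at most `N`. -/
def Config.Bounded (N : ℕ) (c : Config) : Prop := c.t.size ≤ N ∧ c.E.Bounded N

/-- The potential of a configuration: the number of applications that rule (1) may still visit
before the next β-transition. -/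
def Config.potential (c : Config) : ℕ := c.t.apps + c.E.apps

theorem Term.apps_le_size (t : Term) : t.apps ≤ t.size := by
  induction t <;> simp only [Term.apps, Term.size] <;> omega

@[simp] theorem ECtx.apps_plugC (E F : ECtx) : (E.plugC F).apps = E.apps + F.apps := by
  induction E <;> simp only [ECtx.plugC, ECtx.apps] <;> omega

@[simp] theorem ECtx.bounded_plugC (N : ℕ) (E F : ECtx) :
    (E.plugC F).Bounded N ↔ E.Bounded N ∧ F.Bounded N := by
  induction E <;> simp only [ECtx.plugC, ECtx.Bounded] <;> tauto

/-- Size and exposed applications depend only on the de Bruijn skeleton. -/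
theorem Term.size_apps_eq_of_toDB_eq (t : Term) : ∀ (u : Term) (Γ Δ : List ℕ),
    t.toDB Γ = u.toDB Δ → t.size = u.size ∧ t.apps = u.apps := by
  induction t with
  | var x =>
    intro u Γ Δ h
    cases u <;> simp only [Term.toDB] at h <;> split at h <;> simp_all [Term.size, Term.apps]
  | lam x t ih =>
    intro u Γ Δ h
    cases u <;> simp only [Term.toDB] at h
    case lam y u =>
      have := ih _ _ _ (Term.DB.lam.inj h)
      simp [Term.size, Term.apps, this]
    case var => split at h <;> cases h
    all_goals cases h
  | app t₁ t₂ ih₁ ih₂ =>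
    intro u Γ Δ h
    cases u <;> simp only [Term.toDB] at h
    case app u₁ u₂ =>
      obtain ⟨h₁, h₂⟩ := Term.DB.app.inj h
      have := ih₁ _ _ _ h₁
      have := ih₂ _ _ _ h₂
      simp [Term.size, Term.apps, *]
    case var => split at h <;> cases h
    all_goals cases h
  | esub t₁ x t₂ ih₁ ih₂ =>
    intro u Γ Δ h
    cases u <;> simp only [Term.toDB] at h
    case esub u₁ y u₂ =>
      obtain ⟨h₁, h₂⟩ := Term.DB.esub.inj h
      have := ih₁ _ _ _ h₁
      have := ih₂ _ _ _ h₂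
      simp [Term.size, Term.apps, *]
    case var => split at h <;> cases h
    all_goals cases h

theorem Term.IsPureValue.apps_eq_zero {v : Term} (h : v.IsPureValue) : v.apps = 0 := by
  cases v <;> simp_all [Term.IsPureValue, Term.apps]

/-- A transition preserves the size bound, and the potential pays for rule (1) while only a
β-transition can raise it, by at most `N`. -/
theorem Step.bounded_and_potential {N : ℕ} {c c' : Config} {r : Rule} (h : Step c r c')
    (hc : c.Bounded N) :
    c'.Bounded N ∧ [r].count Rule.r1 + c'.potential ≤
      c.potential + N * labelCount [r] Label.b := by
  cases h with
  | r1 | r2 | r3 =>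
    simp [Config.Bounded, Config.potential, ECtx.Bounded, ECtx.apps, Term.size, Term.apps,
      labelCount, Rule.label] at hc ⊢
    grind
  | @r4 x t u E A =>
    have := t.apps_le_size
    simp [Config.Bounded, Config.potential, ECtx.Bounded, ECtx.apps, Term.size, Term.apps,
      labelCount, Rule.label] at hc ⊢
    grind
  | r5 hv _ _ _ _ hcopy =>
    have := hv.apps_eq_zero
    have := Term.size_apps_eq_of_toDB_eq _ _ _ _ hcopy.1
    simp [Config.Bounded, Config.potential, ECtx.Bounded, ECtx.apps,
      labelCount, Rule.label] at hc ⊢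
    grind
  | r6 =>
    simp [Config.Bounded, Config.potential, ECtx.Bounded, ECtx.apps,
      labelCount, Rule.label] at hc ⊢
    grind

theorem Exec.count_r1_le {N : ℕ} {c c' : Config} {e : List Rule} (h : Exec c e c')
    (hc : c.Bounded N) :
    e.count Rule.r1 + c'.potential ≤ c.potential + N * labelCount e Label.b := by
  induction h with
  | nil => simp
  | @cons c c₁ c₂ r rs hs _ ih =>
    obtain ⟨hb, hp⟩ := hs.bounded_and_potential hc
    have ih := ih hb
    have h₁ : (r :: rs).count Rule.r1 = [r].count Rule.r1 + rs.count Rule.r1 := by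
      rw [← List.count_append]; rfl
    have h₂ : labelCount (r :: rs) Label.b = labelCount [r] Label.b + labelCount rs Label.b := by
      simp only [labelCount]; rw [← List.count_append]; rfl
    rw [h₁, h₂, mul_add]
    omega

/-- For every execution `e` from an initial configuration
`(t̄₀, ⟨·⟩)_term`, the number of occurrences of rule (1) in `e` is at most
`|t̄₀| · (5·|e|_b + 2)`. -/
theorem rule1_count_bound
    (t₀ : Term) (h₀ : InitialTerm t₀)
    (c : Config) (e : List Rule)
    (hexec : Exec ⟨t₀, ECtx.hole, Tag.term⟩ e c) :
    e.count Rule.r1 ≤ t₀.size * (5 * labelCount e Label.b + 2) := by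
  have h := hexec.count_r1_le (N := t₀.size) ⟨le_rfl, trivial⟩
  have ha := t₀.apps_le_size
  simp only [Config.potential, ECtx.apps] at h
  nlinarith [Nat.zero_le (t₀.size * labelCount e Label.b)]

end SAM
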